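/- The sum ∑_{n=1}^∞ H_n / ((2n+1) C(2n,n)) equals the negative of the integral from 0 to 1 of log(1 - v(1-v)) / (1 - v(1-v)) dv. -/

import Mathlib

lemma aux_beta (n : ℕ) : ∫ v in (0:ℝ)..1, (v * (1 - v)) ^ n =
    1 / ((2 * n + 1) * (Nat.choose (2 * n) n)) := by
  induction n with
  | zero => simp
  | succ n ih =>
    have hd : ∀ v : ℝ, HasDerivAt (fun v : ℝ => (1 - 2 * v) * (v * (1 - v)) ^ (n + 1))
        ((n + 1) * (v * (1 - v)) ^ n - (4 * n + 6) * (v * (1 - v)) ^ (n + 1)) v := by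
      intro v
      have h1 : HasDerivAt (fun v : ℝ => v * (1 - v)) (1 - 2 * v) v := by
        have := (hasDerivAt_id v).mul ((hasDerivAt_id v).const_sub 1)
        exact this.congr_deriv (by simp; ring)
      have h2 : HasDerivAt (fun v : ℝ => 1 - 2 * v) (-2) v := by
        have := ((hasDerivAt_id v).const_mul 2).const_sub 1
        exact this.congr_deriv (by simp)
      have := h2.mul (h1.pow (n + 1))
      refine this.congr_deriv ?_
      push_cast
      simp only [Nat.add_sub_cancel, Pi.pow_apply]
      ring
    have hi := intervalIntegral.integral_eq_sub_of_hasDerivAt (a := 0) (b := 1)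
      (fun v _ => hd v) (Continuous.intervalIntegrable (by fun_prop) _ _)
    rw [intervalIntegral.integral_sub (Continuous.intervalIntegrable (by fun_prop) _ _)
      (Continuous.intervalIntegrable (by fun_prop) _ _),
      intervalIntegral.integral_const_mul, intervalIntegral.integral_const_mul, ih] at hi
    simp only [sub_self, mul_zero, zero_mul, ne_eq, Nat.succ_ne_zero, not_false_eq_true,
      zero_pow] at hi
    have hc : ((n : ℝ) + 1) * (Nat.choose (2 * (n + 1)) (n + 1) : ℕ) =
        2 * (2 * n + 1) * (Nat.choose (2 * n) n : ℕ) := by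
      exact_mod_cast Nat.succ_mul_centralBinom_succ n
    have hp : (0:ℝ) < (Nat.choose (2 * n) n : ℕ) := by
      exact_mod_cast Nat.centralBinom_pos n
    have hp' : (0:ℝ) < (Nat.choose (2 * (n + 1)) (n + 1) : ℕ) := by
      exact_mod_cast Nat.centralBinom_pos (n + 1)
    generalize (∫ v in (0:ℝ)..1, (v * (1 - v)) ^ (n + 1)) = I at *
    generalize ((Nat.choose (2 * n) n : ℕ) : ℝ) = c at *
    generalize ((Nat.choose (2 * (n + 1)) (n + 1) : ℕ) : ℝ) = d at *
    have hn : (0:ℝ) < n + 1 := by positivity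
    have hd' : d = 2 * (2 * n + 1) * c / (n + 1) := by
      field_simp; linarith
    have hI : I = (n + 1) * (1 / ((2 * n + 1) * c)) / (4 * n + 6) := by
      rw [eq_div_iff (by positivity)]; linarith
    rw [hI, hd']
    push_cast
    field_simp
    ring

lemma aux_harm_nonneg (n : ℕ) : 0 ≤ (harmonic n : ℝ) := by
  induction n with
  | zero => simp
  | succ n ih => rw [harmonic_succ]; push_cast; positivity

lemma aux_harm_le (n : ℕ) : (harmonic n : ℝ) ≤ n := by
  induction n with
  | zero => simp
  | succ n ih =>
    rw [harmonic_succ]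
    push_cast
    have : ((n : ℝ) + 1)⁻¹ ≤ 1 := inv_le_one_of_one_le₀ (by linarith [n.cast_nonneg (α := ℝ)])
    linarith

lemma aux_summable {x : ℝ} (h0 : 0 ≤ x) (h1 : x < 1) : Summable fun n : ℕ => (n : ℝ) * x ^ n := by
  simpa using summable_pow_mul_geometric_of_norm_lt_one 1
    (show ‖x‖ < 1 by rwa [Real.norm_of_nonneg h0])

lemma aux_series {x : ℝ} (h0 : 0 ≤ x) (h1 : x < 1) :
    HasSum (fun n : ℕ => (harmonic n : ℝ) * x ^ n) (-(Real.log (1 - x) / (1 - x))) := by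
  have hs : Summable (fun n : ℕ => (harmonic n : ℝ) * x ^ n) :=
    Summable.of_nonneg_of_le (fun n => mul_nonneg (aux_harm_nonneg n) (pow_nonneg h0 n))
      (fun n => mul_le_mul_of_nonneg_right (aux_harm_le n) (pow_nonneg h0 n))
      (aux_summable h0 h1)
  obtain ⟨S, hS⟩ := hs
  have hl := Real.hasSum_pow_div_log_of_abs_lt_one (x := x) (by rwa [abs_of_nonneg h0])
  have h2 := (hS.mul_left x).add hl
  have h3 : HasSum (fun n : ℕ => (harmonic (n + 1) : ℝ) * x ^ (n + 1)) S := by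
    rw [hasSum_nat_add_iff (f := fun n : ℕ => (harmonic n : ℝ) * x ^ n) 1]
    simpa using hS
  have h4 : (fun n : ℕ => (harmonic (n + 1) : ℝ) * x ^ (n + 1)) =
      fun n : ℕ => x * ((harmonic n : ℝ) * x ^ n) + x ^ (n + 1) / (n + 1) := by
    funext n
    rw [harmonic_succ]
    push_cast
    ring
  rw [h4] at h3
  have h5 := h3.unique h2
  have : S = -(Real.log (1 - x) / (1 - x)) := by
    rw [← neg_div, eq_div_iff (by linarith)]
    linarith
  rwa [← this]

theorem stmt_9 :
    ∑' n : ℕ, (harmonic n : ℝ) / ((2 * n + 1) * (Nat.choose (2 * n) n)) =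
      -∫ v in (0:ℝ)..1, Real.log (1 - v * (1 - v)) / (1 - v * (1 - v)) := by
  have hx : ∀ v ∈ Set.uIoc (0:ℝ) 1, 0 ≤ v * (1 - v) ∧ v * (1 - v) ≤ 1 / 4 := by
    intro v hv
    rw [Set.uIoc_of_le zero_le_one] at hv
    exact ⟨mul_nonneg hv.1.le (by linarith [hv.2]), by nlinarith [sq_nonneg (v - 1 / 2)]⟩
  have key := intervalIntegral.hasSum_integral_of_dominated_convergence
    (μ := MeasureTheory.volume) (a := 0) (b := 1)
    (F := fun (n : ℕ) (v : ℝ) => (harmonic n : ℝ) * (v * (1 - v)) ^ n)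
    (f := fun v : ℝ => -(Real.log (1 - v * (1 - v)) / (1 - v * (1 - v))))
    (fun n _ => (n : ℝ) * (1 / 4 : ℝ) ^ n)
    (fun n => Continuous.aestronglyMeasurable (by fun_prop))
    (fun n => Filter.Eventually.of_forall fun v hv => by
      obtain ⟨h0, h1⟩ := hx v hv
      rw [Real.norm_of_nonneg (mul_nonneg (aux_harm_nonneg n) (pow_nonneg h0 n))]
      exact mul_le_mul (aux_harm_le n) (pow_le_pow_left₀ h0 h1 n) (pow_nonneg h0 n)
        n.cast_nonneg)
    (Filter.Eventually.of_forall fun v hv => aux_summable (by norm_num) (by norm_num))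
    (by simp)
    (Filter.Eventually.of_forall fun v hv => by
      obtain ⟨h0, h1⟩ := hx v hv
      exact aux_series h0 (by linarith))
  rw [← intervalIntegral.integral_neg, ← key.tsum_eq]
  congr 1
  funext n
  rw [intervalIntegral.integral_const_mul, aux_beta, mul_one_div]
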